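/- Let W̃ = (G̃, m̃) be a ℤ-periodic tree with standard weights and quotient graph W = (G, m). Then the Laplacian Δ^{W̃} has full spectrum [0, 2] if and only if G̃ is the standard lattice ℤ, if and only if G is a cycle graph, if and only if G has no vertex of degree 1. -/

import Mathlib

open Matrix BigOperators

/-- Sum of edge weights over edges incident to `v` (loops counted twice). -/
noncomputable def edgeSumAt {V E : Type*} [Fintype E] [DecidableEq V] (src tgt : E → V)
    (mE : E → ℝ) (v : V) : ℝ :=
  ∑ e : E, ((if src e = v then mE e else 0) + (if tgt e = v then mE e else 0))

/-- Relative weight `ρ(v) = m(E_v)/m(v)`. -/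
noncomputable def rho {V E : Type*} [Fintype E] [DecidableEq V] (src tgt : E → V)
    (m : V → ℝ) (mE : E → ℝ) (v : V) : ℝ :=
  edgeSumAt src tgt mE v / m v

/-- Matrix of the discrete magnetic Laplacian (in the orthonormal basis
`m(v)^{-1/2} 1_v` of `ℓ²(V,m)`), with unimodular phases `z e` on the edges. -/
noncomputable def dmlPhase {V E : Type*} [Fintype E] [DecidableEq V] (src tgt : E → V)
    (m : V → ℝ) (mE : E → ℝ) (z : E → ℂ) : Matrix V V ℂ :=
  fun u v =>
    (if u = v then ((rho src tgt m mE u : ℝ) : ℂ) else 0) -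
      ((1 / (Real.sqrt (m u) * Real.sqrt (m v)) : ℝ) : ℂ) *
        ∑ e : E, (mE e : ℂ) *
          ((if src e = v ∧ tgt e = u then z e else 0) +
           (if tgt e = v ∧ src e = u then starRingEnd ℂ (z e) else 0))

/-- Discrete magnetic Laplacian with vector potential `α : E → ℝ`. -/
noncomputable def dml {V E : Type*} [Fintype E] [DecidableEq V] (src tgt : E → V)
    (m : V → ℝ) (mE : E → ℝ) (α : E → ℝ) : Matrix V V ℂ :=
  dmlPhase src tgt m mE (fun e => Complex.exp ((α e : ℂ) * Complex.I))

/-- Real spectrum of a complex matrix. -/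
noncomputable def realSpec {V : Type*} [Fintype V] [DecidableEq V] (M : Matrix V V ℂ) : Set ℝ :=
  {x : ℝ | (x : ℂ) ∈ spectrum ℂ M}

/-- Degree of a vertex in the multigraph (loops counted twice). -/
def mdeg {V E : Type*} [Fintype E] [DecidableEq V] (src tgt : E → V) (v : V) : ℕ :=
  ∑ e : E, ((if src e = v then 1 else 0) + (if tgt e = v then 1 else 0))

/-- Simple graph underlying the multigraph restricted to the edge set `S`. -/
def multiGraph {V E : Type*} (src tgt : E → V) (S : Set E) : SimpleGraph V :=
  SimpleGraph.fromRel (fun u v => ∃ e ∈ S, src e = u ∧ tgt e = v)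

/-- `G − A` is a tree: connected with `|E \ A| = |V| − 1`. -/
def isTreeAfter {V E : Type*} [Fintype V] [Fintype E] [DecidableEq E] (src tgt : E → V)
    (A : Finset E) : Prop :=
  (multiGraph src tgt {e | e ∉ A}).Connected ∧
    (Finset.univ.filter (fun e => e ∉ A)).card = Fintype.card V - 1

/-- Magnetic spectral gaps set `[0, 2ρ_∞] \ ⋃_α σ(Δ_α)`. -/
noncomputable def msSet {V E : Type*} [Fintype V] [Fintype E] [DecidableEq V] [Nonempty V]
    (src tgt : E → V) (m : V → ℝ) (mE : E → ℝ) : Set ℝ :=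
  Set.Icc 0 (2 * Finset.univ.sup' Finset.univ_nonempty (rho src tgt m mE)) \
    ⋃ (α : E → ℝ), realSpec (dml src tgt m mE α)

/-!
Let `e₀` be an edge on the unique cycle of the quotient, so that every magnetic potential is gauge
equivalent to one supported on `e₀`. Let `H s` be the Laplacian with phase `s` on `e₀`, `L` the
Laplacian of the graph with `e₀` deleted, and `K` the compression of `H s` to the functions
vanishing at an endpoint `u` of `e₀`; neither `L` nor `K` depends on `s`. By Courant–Fischer the
`i`-th eigenvalue of `H s` lies between those of `L` and `K`, for all `s` at once. If these bands
covered `[0, 2ρ_∞]`, then at every energy `L` would have counted at least one eigenvalue more than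
`K`; integrating the counting functions gives `tr L ≤ tr K`. This fails when `u` has degree at
least `3`, and the cycle does pass through such a `u` as soon as some vertex has degree `1`.

If instead all degrees are `2`, the flow around the cycle orients every edge. Placing the same
phase `κ` along that flow on all edges makes a constant function an eigenvector, with eigenvalue
proportional to `2 - 2 cos κ`, and following the flow upstairs gives the successor map of the
lattice.
-/

section CountingIntegral

open MeasureTheory
open scoped Finset

variable {ι : Type*} [Fintype ι] {R : ℝ} {a : ι → ℝ}

lemma intervalIntegral_card_lt (ha : ∀ i, a i ∈ Set.Icc 0 R) :
    ∫ x in (0)..R, (#{i | a i < x} : ℝ) = ∑ i, (R - a i) := by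
  have hstep (i) : ∫ x in (0)..R, Set.indicator {x | x ≤ a i} (fun _ => (1 : ℝ)) x = a i := by
    simp [intervalIntegral.integral_indicator (ha i)]
  have hint (i) : IntervalIntegrable (Set.indicator {x | x ≤ a i} fun _ => (1 : ℝ)) volume 0 R :=
    Antitone.intervalIntegrable fun x y hxy => by
      simp only [Set.indicator_apply, Set.mem_ofPred_eq]
      split_ifs <;> linarith
  have hcard (x : ℝ) : (#{i | a i < x} : ℝ) =
      ∑ i, (1 - Set.indicator {x | x ≤ a i} (fun _ => (1 : ℝ)) x) := by
    rw [Finset.natCast_card_filter]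
    refine Finset.sum_congr rfl fun i _ => ?_
    simp only [Set.indicator_apply, Set.mem_ofPred_eq]
    split_ifs <;> linarith
  simp_rw [hcard]
  rw [intervalIntegral.integral_finsetSum fun i _ => intervalIntegrable_const.sub (hint i)]
  refine Finset.sum_congr rfl fun i _ => ?_
  rw [intervalIntegral.integral_sub intervalIntegrable_const (hint i), hstep]
  simp

lemma intervalIntegral_card_le (ha : ∀ i, a i ∈ Set.Icc 0 R) :
    ∫ x in (0)..R, (#{i | a i ≤ x} : ℝ) = ∑ i, (R - a i) := by
  rw [← intervalIntegral_card_lt ha]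
  refine intervalIntegral.integral_congr_ae ?_
  filter_upwards [(Set.finite_range a).countable.ae_notMem volume] with x hx _
  congr 2 with i
  simp only [Finset.mem_filter_univ]
  exact ⟨fun h => h.lt_of_ne fun h => hx ⟨i, h⟩, le_of_lt⟩

end CountingIntegral

section EigenvalueCounting

open MeasureTheory
open scoped MatrixOrder ComplexOrder Finset Topology

variable {𝕜 ι κ : Type*} [RCLike 𝕜] [Fintype ι] [DecidableEq ι] [Fintype κ] [DecidableEq κ]
  {A : Matrix ι ι 𝕜} {K : Matrix κ κ 𝕜}

/-- The coordinates of a vector in an orthonormal eigenbasis of a Hermitian matrix. -/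
noncomputable def eigenCoords (hA : A.IsHermitian) : (ι → 𝕜) →ₗ[𝕜] (ι → 𝕜) :=
  Matrix.mulVecLin (hA.eigenvectorUnitary : Matrix ι ι 𝕜)ᴴ

lemma star_eigenCoords_dotProduct_mulVec (hA : A.IsHermitian) (D : Matrix ι ι 𝕜) (f : ι → 𝕜) :
    star (eigenCoords hA f) ⬝ᵥ D *ᵥ eigenCoords hA f =
      star f ⬝ᵥ ((hA.eigenvectorUnitary : Matrix ι ι 𝕜) * D *
        (hA.eigenvectorUnitary : Matrix ι ι 𝕜)ᴴ) *ᵥ f := by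
  rw [eigenCoords, mulVecLin_apply, star_mulVec, conjTranspose_conjTranspose, ← dotProduct_mulVec,
    mulVec_mulVec, mulVec_mulVec]

lemma re_star_dotProduct_self_eq_sum (hA : A.IsHermitian) (f : ι → 𝕜) :
    RCLike.re (star f ⬝ᵥ f) = ∑ i, ‖eigenCoords hA f i‖ ^ 2 := by
  have h := star_eigenCoords_dotProduct_mulVec hA 1 f
  rw [mul_one, ← star_eq_conjTranspose, mem_unitaryGroup_iff.1 hA.eigenvectorUnitary.2, one_mulVec,
    one_mulVec] at h
  rw [← h, dotProduct, map_sum]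
  simp only [Pi.star_apply, RCLike.star_def, RCLike.conj_mul]
  norm_cast

lemma re_star_dotProduct_mulVec_eq_sum (hA : A.IsHermitian) (f : ι → 𝕜) :
    RCLike.re (star f ⬝ᵥ A *ᵥ f) = ∑ i, hA.eigenvalues i * ‖eigenCoords hA f i‖ ^ 2 := by
  have h := star_eigenCoords_dotProduct_mulVec hA (diagonal (RCLike.ofReal ∘ hA.eigenvalues)) f
  rw [← star_eq_conjTranspose, ← Unitary.conjStarAlgAut_apply (S := 𝕜), ← hA.spectral_theorem] at h
  rw [← h, dotProduct, map_sum]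
  refine Finset.sum_congr rfl fun i _ => ?_
  rw [mulVec_diagonal, Pi.star_apply, RCLike.star_def, mul_left_comm, RCLike.conj_mul,
    Function.comp_apply]
  norm_cast

lemma re_star_dotProduct_mulVec_le_of_eigenCoords_eq_zero (hA : A.IsHermitian) {x : ℝ} {f : ι → 𝕜}
    (hf : ∀ i, x < hA.eigenvalues i → eigenCoords hA f i = 0) :
    RCLike.re (star f ⬝ᵥ A *ᵥ f) ≤ x * RCLike.re (star f ⬝ᵥ f) := by
  rw [re_star_dotProduct_mulVec_eq_sum hA, re_star_dotProduct_self_eq_sum hA, Finset.mul_sum]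
  refine Finset.sum_le_sum fun i _ => ?_
  obtain hi | hi := le_or_gt (hA.eigenvalues i) x
  · gcongr
  · simp [hf i hi]

lemma lt_re_star_dotProduct_mulVec_of_eigenCoords_eq_zero (hA : A.IsHermitian) {x : ℝ}
    {f : ι → 𝕜} (hf0 : 0 < RCLike.re (star f ⬝ᵥ f))
    (hf : ∀ i, hA.eigenvalues i ≤ x → eigenCoords hA f i = 0) :
    x * RCLike.re (star f ⬝ᵥ f) < RCLike.re (star f ⬝ᵥ A *ᵥ f) := by
  rw [re_star_dotProduct_self_eq_sum hA] at hf0 ⊢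
  obtain ⟨i, -, hi⟩ := Finset.exists_lt_of_sum_lt (Finset.sum_const_zero.trans_lt hf0)
  rw [re_star_dotProduct_mulVec_eq_sum hA, Finset.mul_sum]
  refine Finset.sum_lt_sum (fun j _ => ?_) ⟨i, Finset.mem_univ i, ?_⟩
  · obtain hj | hj := le_or_gt (hA.eigenvalues j) x
    · simp [hf j hj]
    · gcongr
  · have : x < hA.eigenvalues i := not_le.1 fun hle => by simp [hf i hle] at hi
    exact mul_lt_mul_of_pos_right this hi

lemma exists_ne_zero_eigenCoords_eq_zero (hA : A.IsHermitian) (hK : K.IsHermitian)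
    (J : Matrix ι κ 𝕜) {x : ℝ}
    (hlt : #{i | hA.eigenvalues i ≤ x} < #{k | hK.eigenvalues k ≤ x}) :
    ∃ f : κ → 𝕜, f ≠ 0 ∧ (∀ i, hA.eigenvalues i ≤ x → eigenCoords hA (J *ᵥ f) i = 0) ∧
      ∀ k, x < hK.eigenvalues k → eigenCoords hK f k = 0 := by
  let coords : (κ → 𝕜) →ₗ[𝕜]
      ({i // hA.eigenvalues i ≤ x} ⊕ {k // ¬ hK.eigenvalues k ≤ x} → 𝕜) :=
    LinearMap.pi (Sum.elim (fun i => LinearMap.proj i.1 ∘ₗ eigenCoords hA ∘ₗ J.mulVecLin)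
      fun k => LinearMap.proj k.1 ∘ₗ eigenCoords hK)
  have hdim : Module.finrank 𝕜 ({i // hA.eigenvalues i ≤ x} ⊕ {k // ¬ hK.eigenvalues k ≤ x} → 𝕜) <
      Module.finrank 𝕜 (κ → 𝕜) := by
    simp only [Module.finrank_fintype_fun_eq_card, Fintype.card_sum, Fintype.card_subtype]
    rw [← Finset.card_univ,
      ← Finset.card_filter_add_card_filter_not (s := .univ) (fun k => hK.eigenvalues k ≤ x)]
    gcongr
  obtain ⟨f, hf, hf0⟩ := (Submodule.ne_bot_iff _).1
    (LinearMap.ker_ne_bot_of_finrank_lt (f := coords) hdim)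
  have hcoords (j) : coords f j = 0 := congrFun (LinearMap.mem_ker.1 hf) j
  exact ⟨f, hf0, fun i hi => hcoords (.inl ⟨i, hi⟩), fun k hk => hcoords (.inr ⟨k, hk.not_ge⟩)⟩

lemma card_eigenvalues_le_le_of_compression_le (hA : A.IsHermitian) (hK : K.IsHermitian)
    {J : Matrix ι κ 𝕜} (hJ : Jᴴ * J = 1) (hJK : Jᴴ * A * J ≤ K) (x : ℝ) :
    #{k | hK.eigenvalues k ≤ x} ≤ #{i | hA.eigenvalues i ≤ x} := by
  by_contra! hlt
  obtain ⟨f, hf0, hfA, hfK⟩ := exists_ne_zero_eigenCoords_eq_zero hA hK J hlt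
  have hnorm : star (J *ᵥ f) ⬝ᵥ (J *ᵥ f) = star f ⬝ᵥ f := by
    rw [star_mulVec, ← dotProduct_mulVec, mulVec_mulVec, hJ, one_mulVec]
  have hform : RCLike.re (star (J *ᵥ f) ⬝ᵥ A *ᵥ (J *ᵥ f)) ≤ RCLike.re (star f ⬝ᵥ K *ᵥ f) := by
    have := (le_iff.1 hJK).re_dotProduct_nonneg f
    rw [sub_mulVec, dotProduct_sub, map_sub, sub_nonneg] at this
    rwa [star_mulVec, ← dotProduct_mulVec, mulVec_mulVec, mulVec_mulVec]
  have hpos : 0 < RCLike.re (star f ⬝ᵥ f) :=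
    (RCLike.pos_iff.1 (dotProduct_star_self_pos_iff.2 hf0)).1
  have hlower := lt_re_star_dotProduct_mulVec_of_eigenCoords_eq_zero hA (hnorm ▸ hpos) hfA
  have hupper := re_star_dotProduct_mulVec_le_of_eigenCoords_eq_zero hK hfK
  rw [hnorm] at hlower
  exact (hlower.trans_le (hform.trans hupper)).false

lemma card_eigenvalues_lt_le_of_compression_le (hA : A.IsHermitian) (hK : K.IsHermitian)
    {J : Matrix ι κ 𝕜} (hJ : Jᴴ * J = 1) (hJK : Jᴴ * A * J ≤ K) (x : ℝ) :
    #{k | hK.eigenvalues k < x} ≤ #{i | hA.eigenvalues i < x} := by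
  have hnear : ∀ᶠ y in 𝓝[<] x, ∀ k, hK.eigenvalues k < x → hK.eigenvalues k ≤ y :=
    Filter.eventually_all.2 fun k => Filter.eventually_imp_distrib_left.2 fun hk =>
      Filter.mem_of_superset (Ioo_mem_nhdsLT hk) fun y hy => hy.1.le
  obtain ⟨y, hy, hyx⟩ := (hnear.and self_mem_nhdsWithin).exists
  calc #{k | hK.eigenvalues k < x} ≤ #{k | hK.eigenvalues k ≤ y} := by gcongr with k; exact hy k
    _ ≤ #{i | hA.eigenvalues i ≤ y} := card_eigenvalues_le_le_of_compression_le hA hK hJ hJK y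
    _ ≤ #{i | hA.eigenvalues i < x} := by gcongr

lemma card_eigenvalues_lt_lt_card_eigenvalues_le {L H : Matrix ι ι 𝕜} (hL : L.IsHermitian)
    (hH : H.IsHermitian) (hK : K.IsHermitian) {J : Matrix ι κ 𝕜} (hJ : Jᴴ * J = 1) (hLH : L ≤ H)
    (hHK : Jᴴ * H * J ≤ K) {x : ℝ} (hx : x ∈ spectrum ℝ H) :
    #{k | hK.eigenvalues k < x} < #{i | hL.eigenvalues i ≤ x} := by
  obtain ⟨i, rfl⟩ := hH.spectrum_real_eq_range_eigenvalues ▸ hx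
  calc #{k | hK.eigenvalues k < hH.eigenvalues i}
    _ ≤ #{j | hH.eigenvalues j < hH.eigenvalues i} :=
      card_eigenvalues_lt_le_of_compression_le hH hK hJ hHK _
    _ < #{j | hH.eigenvalues j ≤ hH.eigenvalues i} :=
      Finset.card_lt_card <| Finset.ssubset_iff_of_subset
        (Finset.monotone_filter_right _ fun _ _ => le_of_lt) |>.2 ⟨i, by simp, by simp⟩
    _ ≤ #{j | hL.eigenvalues j ≤ hH.eigenvalues i} :=
      card_eigenvalues_le_le_of_compression_le hL hH (J := 1) (by simp) (by simpa using hLH) _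

lemma spectrum_subset_Icc {R : ℝ} (h0 : 0 ≤ A) (hR : A ≤ algebraMap ℝ _ R) :
    spectrum ℝ A ⊆ Set.Icc 0 R := fun x hx =>
  ⟨spectrum_nonneg_of_nonneg h0 hx,
    (le_algebraMap_iff_spectrum_le (IsSelfAdjoint.of_nonneg h0)).1 hR x hx⟩

lemma re_trace_le_re_trace_of_forall_exists_mem_spectrum {L : Matrix ι ι 𝕜} {J : Matrix ι κ 𝕜}
    {R : ℝ} (hJ : Jᴴ * J = 1) (hcard : Fintype.card ι = Fintype.card κ + 1) (hR : 0 ≤ R)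
    (hL : 0 ≤ L) (hLR : L ≤ algebraMap ℝ _ R) (hK : 0 ≤ K) (hKR : K ≤ algebraMap ℝ _ R)
    (hcover : ∀ x ∈ Set.Icc 0 R,
      ∃ H : Matrix ι ι 𝕜, H.IsHermitian ∧ x ∈ spectrum ℝ H ∧ L ≤ H ∧ Jᴴ * H * J ≤ K) :
    RCLike.re L.trace ≤ RCLike.re K.trace := by
  have hLh := (nonneg_iff_posSemidef.1 hL).1
  have hKh := (nonneg_iff_posSemidef.1 hK).1
  have hcount (x) (hx : x ∈ Set.Icc 0 R) :
      (#{k | hKh.eigenvalues k < x} : ℝ) + 1 ≤ #{i | hLh.eigenvalues i ≤ x} := by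
    obtain ⟨H, hH, hxH, hLH, hHK⟩ := hcover x hx
    exact_mod_cast card_eigenvalues_lt_lt_card_eigenvalues_le hLh hH hKh hJ hLH hHK hxH
  have hltInt : IntervalIntegrable (fun x => (#{k | hKh.eigenvalues k < x} : ℝ)) volume 0 R :=
    Monotone.intervalIntegrable fun x y hxy => by gcongr
  have hleInt : IntervalIntegrable (fun x => (#{i | hLh.eigenvalues i ≤ x} : ℝ)) volume 0 R :=
    Monotone.intervalIntegrable fun x y hxy => by gcongr
  have hintegral := intervalIntegral.integral_mono_on hR (hltInt.add intervalIntegrable_const)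
    hleInt hcount
  rw [intervalIntegral.integral_add hltInt intervalIntegrable_const,
    intervalIntegral_card_lt fun k =>
      spectrum_subset_Icc hK hKR (hKh.eigenvalues_mem_spectrum_real k),
    intervalIntegral_card_le fun i =>
      spectrum_subset_Icc hL hLR (hLh.eigenvalues_mem_spectrum_real i)] at hintegral
  simp only [intervalIntegral.integral_const, Finset.sum_sub_distrib, Finset.sum_const,
    Finset.card_univ, hcard, nsmul_eq_mul, smul_eq_mul, Nat.cast_add, Nat.cast_one] at hintegral
  rw [hLh.trace_eq_sum_eigenvalues, hKh.trace_eq_sum_eigenvalues]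
  norm_cast
  linarith

end EigenvalueCounting

/-- The map `f ↦ (e ↦ f (tgt e) - f (src e))` from functions on vertices to functions on edges; its
range consists of the vector potentials that can be gauged away. -/
def coboundary {V E : Type*} (src tgt : E → V) : (V → ℝ) →ₗ[ℝ] (E → ℝ) :=
  LinearMap.funLeft ℝ ℝ tgt - LinearMap.funLeft ℝ ℝ src

lemma coboundary_apply {V E : Type*} (src tgt : E → V) (φ : V → ℝ) (e : E) :
    coboundary src tgt φ e = φ (tgt e) - φ (src e) :=
  rfl

/-- The matrix of the magnetic coboundary `f ↦ (e ↦ f (tgt e) - exp (i α_e) f (src e))` in the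
standard bases. -/
noncomputable def magneticCoboundary {V E : Type*} [DecidableEq V] (src tgt : E → V) (α : E → ℝ) :
    Matrix E V ℂ := fun e v =>
  (if tgt e = v then 1 else 0) - if src e = v then Complex.exp (α e * Complex.I) else 0

lemma star_exp_ofReal_mul_I (a : ℝ) :
    star (Complex.exp (a * Complex.I)) = Complex.exp (-(a * Complex.I)) := by
  simp [← Complex.exp_conj]

lemma star_magneticCoboundary_mul {V E : Type*} [DecidableEq V] (src tgt : E → V)
    (α : E → ℝ) (e : E) (u v : V) :
    star (magneticCoboundary src tgt α e u) * magneticCoboundary src tgt α e v =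
      (if u = v then (if src e = u then 1 else 0) + (if tgt e = u then 1 else 0) else 0) -
        ((if src e = v ∧ tgt e = u then Complex.exp (α e * Complex.I) else 0) +
          if tgt e = v ∧ src e = u then star (Complex.exp (α e * Complex.I)) else 0) := by
  have hunit : star (Complex.exp (α e * Complex.I)) * Complex.exp (α e * Complex.I) = 1 := by
    rw [star_exp_ofReal_mul_I, ← Complex.exp_add, neg_add_cancel, Complex.exp_zero]
  unfold magneticCoboundary
  generalize Complex.exp (α e * Complex.I) = z at hunit ⊢
  by_cases huv : u = v
  · subst huv
    by_cases hs : src e = u <;> by_cases ht : tgt e = u <;>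
      simp only [hs, ht, if_true, if_false, and_true, and_self, and_false, star_sub, star_one,
        star_zero]
    · linear_combination hunit
    · linear_combination hunit
    · ring
    · ring
  · rw [if_neg huv]
    split_ifs <;> simp_all

section MagneticLaplacian

open scoped MatrixOrder ComplexOrder

variable {V E : Type*} [Fintype E] [DecidableEq V] (src tgt : E → V) {m : V → ℝ} {mE : E → ℝ}

lemma dml_apply (hm : ∀ v, 0 ≤ m v) (α : E → ℝ) (u v : V) :
    dml src tgt m mE α u v = (√(m u) : ℂ)⁻¹ * (√(m v) : ℂ)⁻¹ *
      ∑ e, (mE e : ℂ) * (star (magneticCoboundary src tgt α e u) *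
        magneticCoboundary src tgt α e v) := by
  have hdiag : (if u = v then (rho src tgt m mE u : ℂ) else 0) = (√(m u) : ℂ)⁻¹ * (√(m v) : ℂ)⁻¹ *
      ∑ e, (mE e : ℂ) *
        if u = v then (if src e = u then 1 else 0) + (if tgt e = u then 1 else 0) else 0 := by
    split_ifs with huv
    · subst huv
      rw [← mul_inv, ← Complex.ofReal_mul, Real.mul_self_sqrt (hm u), mul_comm, ← div_eq_mul_inv,
        rho, edgeSumAt]
      push_cast [apply_ite Complex.ofReal]
      simp only [mul_add, mul_ite, mul_one, mul_zero]
    · simp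
  simp only [star_magneticCoboundary_mul, mul_sub, Finset.sum_sub_distrib, ← hdiag]
  simp [dml, dmlPhase, mul_comm]

lemma dml_eq_conjTranspose_mul_mul [Fintype V] [DecidableEq E] (hm : ∀ v, 0 ≤ m v) (α : E → ℝ) :
    dml src tgt m mE α =
      (magneticCoboundary src tgt α * diagonal fun v => (√(m v) : ℂ)⁻¹)ᴴ *
        diagonal (fun e => (mE e : ℂ)) *
          (magneticCoboundary src tgt α * diagonal fun v => (√(m v) : ℂ)⁻¹) := by
  ext u v
  rw [dml_apply src tgt hm, mul_apply, Finset.mul_sum]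
  refine Finset.sum_congr rfl fun e _ => ?_
  simp only [mul_diagonal, conjTranspose_apply, star_mul', star_inv₀, RCLike.star_def,
    Complex.conj_ofReal]
  ring

lemma dml_nonneg [Finite V] (hm : ∀ v, 0 ≤ m v) (hmE : ∀ e, 0 ≤ mE e) (α : E → ℝ) :
    0 ≤ dml src tgt m mE α := by
  classical
  have := Fintype.ofFinite V
  rw [dml_eq_conjTranspose_mul_mul src tgt hm, nonneg_iff_posSemidef]
  refine PosSemidef.conjTranspose_mul_mul_same (PosSemidef.diagonal fun e => ?_) _
  simpa using hmE e

lemma rho_add (w w' : E → ℝ) (v : V) :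
    rho src tgt m (w + w') v = rho src tgt m w v + rho src tgt m w' v := by
  simp only [rho, edgeSumAt, ← add_div, ← Finset.sum_add_distrib, Pi.add_apply]
  congr 2 with e
  split_ifs <;> ring

lemma dml_weight_add (w w' α : E → ℝ) :
    dml src tgt m (w + w') α = dml src tgt m w α + dml src tgt m w' α := by
  ext u v
  simp only [dml, dmlPhase, Matrix.add_apply, rho_add, Pi.add_apply, Complex.ofReal_add, add_mul,
    Finset.sum_add_distrib]
  split_ifs <;> ring

lemma dml_mono [Finite V] (hm : ∀ v, 0 ≤ m v) {w w' : E → ℝ} (hw : w ≤ w') (α : E → ℝ) :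
    dml src tgt m w α ≤ dml src tgt m w' α := by
  rw [← sub_add_cancel w' w, dml_weight_add]
  exact le_add_of_nonneg_left (dml_nonneg src tgt hm (fun e => sub_nonneg.2 (hw e)) α)

lemma dml_add_dml_add_pi (α : E → ℝ) :
    dml src tgt m mE α + dml src tgt m mE (fun e => α e + Real.pi) =
      diagonal fun v => (2 * rho src tgt m mE v : ℂ) := by
  have hexp (e : E) : Complex.exp ((α e + Real.pi : ℝ) * Complex.I) =
      -Complex.exp (α e * Complex.I) := by
    rw [Complex.ofReal_add, add_mul, Complex.exp_add, Complex.exp_pi_mul_I, mul_neg_one]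
  ext u v
  have hneg (p : Prop) [Decidable p] (z : ℂ) :
      (if p then -z else 0) = -(if p then z else 0) := by
    split_ifs <;> simp
  simp only [dml, dmlPhase, Matrix.add_apply, diagonal_apply, hexp, map_neg, hneg, ← neg_add,
    mul_neg, Finset.sum_neg_distrib]
  split_ifs <;> ring

lemma dml_le [Fintype V] (hm : ∀ v, 0 ≤ m v) (hmE : ∀ e, 0 ≤ mE e) {R : ℝ}
    (hR : ∀ v, 2 * rho src tgt m mE v ≤ R) (α : E → ℝ) :
    dml src tgt m mE α ≤ algebraMap ℝ _ R := by
  calc dml src tgt m mE α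
    _ ≤ diagonal fun v => (2 * rho src tgt m mE v : ℂ) := by
      rw [← dml_add_dml_add_pi src tgt α]
      exact le_add_of_nonneg_right (dml_nonneg src tgt hm hmE _)
    _ ≤ algebraMap ℝ _ R := by
      rw [le_iff, algebraMap_eq_diagonal, diagonal_sub]
      refine PosSemidef.diagonal fun v => ?_
      simp only [Pi.zero_apply, Pi.algebraMap_apply, Complex.coe_algebraMap, sub_nonneg]
      exact_mod_cast hR v

variable (m mE)

lemma dml_add_coboundary_apply (α : E → ℝ) (φ : V → ℝ) (u v : V) :
    dml src tgt m mE (α + coboundary src tgt φ) u v =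
      Complex.exp (φ u * Complex.I) * dml src tgt m mE α u v *
        Complex.exp (-(φ v * Complex.I)) := by
  have hunit (x : ℝ) : Complex.exp (x * Complex.I) * Complex.exp (-(x * Complex.I)) = 1 := by
    rw [← Complex.exp_add, add_neg_cancel, Complex.exp_zero]
  have hterm (e : E) :
      ((if src e = v ∧ tgt e = u then
          Complex.exp ((α e + (φ (tgt e) - φ (src e)) : ℝ) * Complex.I) else 0) +
        if tgt e = v ∧ src e = u then
          star (Complex.exp ((α e + (φ (tgt e) - φ (src e)) : ℝ) * Complex.I)) else 0) =
      Complex.exp (φ u * Complex.I) *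
        ((if src e = v ∧ tgt e = u then Complex.exp (α e * Complex.I) else 0) +
          if tgt e = v ∧ src e = u then star (Complex.exp (α e * Complex.I)) else 0) *
        Complex.exp (-(φ v * Complex.I)) := by
    simp only [star_exp_ofReal_mul_I, mul_add, add_mul, mul_ite, ite_mul, mul_zero, zero_mul,
      ← Complex.exp_add]
    congr 1 <;> refine if_ctx_congr Iff.rfl ?_ fun _ => rfl
    all_goals
      rintro ⟨rfl, rfl⟩
      push_cast
      ring_nf
  simp only [RCLike.star_def] at hterm
  simp only [dml, dmlPhase, coboundary_apply, Pi.add_apply, hterm, mul_sub, sub_mul]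
  congr 1
  · split_ifs with huv
    · rw [← huv, mul_right_comm, hunit, one_mul]
    · simp
  · simp only [Finset.mul_sum, Finset.sum_mul]
    exact Finset.sum_congr rfl fun e _ => by ring

lemma realSpec_eq_spectrum [Fintype V] (M : Matrix V V ℂ) : realSpec M = spectrum ℝ M :=
  Set.ext fun _ => spectrum.algebraMap_mem_iff (R := ℝ) ℂ

lemma realSpec_dml_add_coboundary [Fintype V] (α : E → ℝ) (φ : V → ℝ) :
    realSpec (dml src tgt m mE (α + coboundary src tgt φ)) = realSpec (dml src tgt m mE α) := by
  let P : (Matrix V V ℂ)ˣ :=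
    { val := diagonal fun v => Complex.exp (φ v * Complex.I)
      inv := diagonal fun v => Complex.exp (-(φ v * Complex.I))
      val_inv := by simp [← Complex.exp_add]
      inv_val := by simp [← Complex.exp_add] }
  have hconj : dml src tgt m mE (α + coboundary src tgt φ) =
      P * dml src tgt m mE α * (P⁻¹ : (Matrix V V ℂ)ˣ) := by
    ext u v
    rw [dml_add_coboundary_apply]
    simp [P]
  rw [realSpec, hconj, spectrum.units_conjugate, realSpec]

end MagneticLaplacian

section SpectralGap

open scoped MatrixOrder ComplexOrder

lemma conjTranspose_mul_mul_submatrix_one {ι κ : Type*} [Fintype ι] [DecidableEq ι] (e : κ → ι)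
    (A : Matrix ι ι ℂ) :
    ((1 : Matrix ι ι ℂ).submatrix id e)ᴴ * A * (1 : Matrix ι ι ℂ).submatrix id e =
      A.submatrix e e := by
  ext i j
  simp [mul_apply, one_apply]

lemma submatrix_le_algebraMap {ι κ : Type*} [Fintype ι] [DecidableEq ι] [Fintype κ]
    [DecidableEq κ] {A : Matrix ι ι ℂ} {R : ℝ} (hA : A ≤ algebraMap ℝ _ R) {e : κ → ι}
    (he : Function.Injective e) : A.submatrix e e ≤ algebraMap ℝ _ R := by
  have h := (le_iff.1 hA).submatrix e
  rw [submatrix_sub, Pi.sub_apply, Pi.sub_apply, algebraMap_eq_diagonal,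
    submatrix_diagonal _ _ he] at h
  rwa [le_iff, algebraMap_eq_diagonal]

lemma eq_of_src_eq_tgt {V E : Type*} [DecidableEq E] {src tgt : E → V} {e₀ : E}
    (hgauge : ∀ α : E → ℝ, ∃ s φ, α = Pi.single e₀ s + coboundary src tgt φ) {e : E}
    (he : src e = tgt e) : e = e₀ := by
  by_contra hne
  obtain ⟨s, φ, h⟩ := hgauge (Pi.single e 1)
  have := congrFun h e
  simp [coboundary_apply, he, hne] at this

variable {V E : Type*} [Fintype E] [DecidableEq V] {src tgt : E → V} {m : V → ℝ} {mE : E → ℝ}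

lemma dml_apply_congr {α β : E → ℝ} {u v : V}
    (h : ∀ e, mE e ≠ 0 → (src e = v ∧ tgt e = u) ∨ (tgt e = v ∧ src e = u) → α e = β e) :
    dml src tgt m mE α u v = dml src tgt m mE β u v := by
  unfold dml dmlPhase
  congr 2
  refine Finset.sum_congr rfl fun e _ => ?_
  obtain he | he := eq_or_ne (mE e) 0
  · simp [he]
  · congr 2
    · exact if_ctx_congr Iff.rfl (fun huv => by simp only [h e he (.inl huv)]) fun _ => rfl
    · exact if_ctx_congr Iff.rfl (fun huv => by simp only [h e he (.inr huv)]) fun _ => rfl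

lemma dml_apply_self {v : V} (hv : ∀ e, src e = v → tgt e = v → mE e = 0) (α : E → ℝ) :
    dml src tgt m mE α v v = rho src tgt m mE v := by
  have hsum : ∑ e, (mE e : ℂ) *
      ((if src e = v ∧ tgt e = v then Complex.exp (α e * Complex.I) else 0) +
        if tgt e = v ∧ src e = v then starRingEnd ℂ (Complex.exp (α e * Complex.I)) else 0) =
      0 := by
    refine Finset.sum_eq_zero fun e _ => ?_
    by_cases he : src e = v ∧ tgt e = v
    · simp [hv e he.1 he.2]
    · simp [he, and_comm]
  simp [dml, dmlPhase, hsum]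

lemma sum_rho_single [Fintype V] [DecidableEq E] (e : E) (c : ℝ) :
    ∑ v, rho src tgt m (Pi.single e c) v = c / m (src e) + c / m (tgt e) := by
  have hsum (v : V) : edgeSumAt src tgt (Pi.single e c) v =
      (if src e = v then c else 0) + if tgt e = v then c else 0 := by
    rw [edgeSumAt, Finset.sum_eq_single e (fun f _ hf => by simp [hf]) (by simp), Pi.single_eq_same]
  simp only [rho, hsum, add_div, ite_div, zero_div, Finset.sum_add_distrib, Finset.sum_ite_eq,
    Finset.mem_univ, if_true]

lemma rho_nonneg (hm : ∀ v, 0 ≤ m v) (hmE : ∀ e, 0 ≤ mE e) (v : V) : 0 ≤ rho src tgt m mE v :=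
  div_nonneg (Finset.sum_nonneg fun e _ => add_nonneg (by split_ifs <;> simp [hmE])
    (by split_ifs <;> simp [hmE])) (hm v)

variable {e₀ : E} {u : V}

lemma submatrix_dml_single [DecidableEq E] (hu : src e₀ = u ∨ tgt e₀ = u) (s : ℝ) :
    (dml src tgt m mE (Pi.single e₀ s)).submatrix
        (Subtype.val : {v // v ≠ u} → V) (Subtype.val : {v // v ≠ u} → V) =
      (dml src tgt m mE 0).submatrix
        (Subtype.val : {v // v ≠ u} → V) (Subtype.val : {v // v ≠ u} → V) := by
  ext v w
  refine dml_apply_congr fun e _ he => ?_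
  have : e ≠ e₀ := by
    rintro rfl
    have := v.2
    have := w.2
    grind
  simp [this]

lemma dml_update_zero_le [Finite V] [DecidableEq E]
    (hm : ∀ v, 0 ≤ m v) (hmE : ∀ e, 0 ≤ mE e) (s : ℝ) :
    dml src tgt m (Function.update mE e₀ 0) 0 ≤ dml src tgt m mE (Pi.single e₀ s) := by
  have heq : dml src tgt m (Function.update mE e₀ 0) 0 =
      dml src tgt m (Function.update mE e₀ 0) (Pi.single e₀ s) := by
    ext u v
    refine dml_apply_congr fun e he _ => ?_
    have : e ≠ e₀ := fun h => he (by simp [h])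
    simp [this]
  rw [heq]
  exact dml_mono src tgt hm (update_le_self_iff.2 (hmE e₀)) _

variable [Fintype V] [Nonempty V]

lemma two_mul_rho_le (v : V) : 2 * rho src tgt m mE v ≤
    2 * Finset.univ.sup' Finset.univ_nonempty (rho src tgt m mE) := by
  gcongr
  exact Finset.le_sup' _ (Finset.mem_univ v)

lemma realSpec_dml_subset_Icc (hm : ∀ v, 0 ≤ m v) (hmE : ∀ e, 0 ≤ mE e) (α : E → ℝ) :
    realSpec (dml src tgt m mE α) ⊆
      Set.Icc 0 (2 * Finset.univ.sup' Finset.univ_nonempty (rho src tgt m mE)) :=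
  realSpec_eq_spectrum (dml src tgt m mE α) ▸ spectrum_subset_Icc (dml_nonneg src tgt hm hmE α)
    (dml_le src tgt hm hmE two_mul_rho_le α)

variable [DecidableEq E]

lemma re_trace_update_zero_le (hm : ∀ v, 0 ≤ m v) (hmE : ∀ e, 0 ≤ mE e)
    (hu : src e₀ = u ∨ tgt e₀ = u)
    (hcover : Set.Icc 0 (2 * Finset.univ.sup' Finset.univ_nonempty (rho src tgt m mE)) ⊆
      ⋃ s, realSpec (dml src tgt m mE (Pi.single e₀ s))) :
    (dml src tgt m (Function.update mE e₀ 0) 0).trace.re ≤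
      ((dml src tgt m mE 0).submatrix (Subtype.val : {v // v ≠ u} → V) Subtype.val).trace.re := by
  have hw (e) : 0 ≤ Function.update mE e₀ 0 e := by
    obtain rfl | he := eq_or_ne e e₀ <;> simp [*]
  have hle := dml_le src tgt hm hmE two_mul_rho_le 0
  refine re_trace_le_re_trace_of_forall_exists_mem_spectrum (𝕜 := ℂ)
    (J := (1 : Matrix V V ℂ).submatrix id Subtype.val) ?_ ?_
    (mul_nonneg zero_le_two ((rho_nonneg hm hmE u).trans (Finset.le_sup' _ (Finset.mem_univ u))))
    (dml_nonneg src tgt hm hw 0) (((dml_update_zero_le hm hmE 0).trans_eq ?_).trans hle) ?_ ?_ ?_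
  · have h := conjTranspose_mul_mul_submatrix_one (Subtype.val : {v // v ≠ u} → V) 1
    rwa [Matrix.mul_one, submatrix_one _ Subtype.val_injective] at h
  · rw [Fintype.card_subtype_compl, Fintype.card_subtype_eq]
    have := Fintype.card_pos_iff.2 ⟨u⟩
    omega
  · rw [Pi.single_zero]
  · exact (nonneg_iff_posSemidef.1 (dml_nonneg src tgt hm hmE 0)).submatrix _ |>.nonneg
  · exact submatrix_le_algebraMap hle Subtype.val_injective
  · intro x hx
    obtain ⟨s, hs⟩ := Set.mem_iUnion.1 (hcover hx)
    refine ⟨_, (nonneg_iff_posSemidef.1 (dml_nonneg src tgt hm hmE (Pi.single e₀ s))).1,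
      realSpec_eq_spectrum (dml src tgt m mE (Pi.single e₀ s)) ▸ hs,
      dml_update_zero_le hm hmE s, ?_⟩
    rw [conjTranspose_mul_mul_submatrix_one, submatrix_dml_single hu]

theorem msSet_nonempty_of_lt_rho (hm : ∀ v, 0 ≤ m v) (hmE : ∀ e, 0 ≤ mE e)
    (hu : src e₀ = u ∨ tgt e₀ = u)
    (hgauge : ∀ α : E → ℝ, ∃ s φ, α = Pi.single e₀ s + coboundary src tgt φ)
    (hlt : mE e₀ / m (src e₀) + mE e₀ / m (tgt e₀) < rho src tgt m mE u) :
    (msSet src tgt m mE).Nonempty := by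
  by_contra! hempty
  have hcover : Set.Icc 0 (2 * Finset.univ.sup' Finset.univ_nonempty (rho src tgt m mE)) ⊆
      ⋃ s, realSpec (dml src tgt m mE (Pi.single e₀ s)) :=
    (Set.sdiff_eq_empty.1 hempty).trans <| Set.iUnion_subset fun α => by
      obtain ⟨s, φ, rfl⟩ := hgauge α
      rw [realSpec_dml_add_coboundary]
      exact Set.subset_iUnion (fun s => realSpec (dml src tgt m mE (Pi.single e₀ s))) s
  have htrace := re_trace_update_zero_le hm hmE hu hcover
  have hcut : (dml src tgt m (Function.update mE e₀ 0) 0).trace.re =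
      ∑ v, rho src tgt m (Function.update mE e₀ 0) v := by
    rw [trace, Complex.re_sum]
    refine Finset.sum_congr rfl fun v _ => ?_
    rw [diag_apply, dml_apply_self, Complex.ofReal_re]
    rintro e hs ht
    rw [eq_of_src_eq_tgt hgauge (hs.trans ht.symm), Function.update_self]
  have hcompress : ((dml src tgt m mE 0).submatrix
      (Subtype.val : {v // v ≠ u} → V) Subtype.val).trace.re =
      ∑ v, rho src tgt m mE v - rho src tgt m mE u := by
    rw [Fintype.sum_eq_add_sum_subtype_ne _ u, add_sub_cancel_left, trace, Complex.re_sum]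
    refine Finset.sum_congr rfl fun v _ => ?_
    rw [diag_apply, submatrix_apply, dml_apply_self, Complex.ofReal_re]
    rintro e hs ht
    have := v.2
    have := eq_of_src_eq_tgt hgauge (hs.trans ht.symm)
    grind
  have hsplit : Function.update mE e₀ 0 + Pi.single e₀ (mE e₀) = mE := by
    ext e
    obtain rfl | he := eq_or_ne e e₀ <;> simp [*]
  have hsum : ∑ v, rho src tgt m (Function.update mE e₀ 0) v +
      (mE e₀ / m (src e₀) + mE e₀ / m (tgt e₀)) = ∑ v, rho src tgt m mE v := by
    rw [← sum_rho_single, ← Finset.sum_add_distrib]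
    simp only [← rho_add, hsplit]
  linarith

end SpectralGap

section Circulation

lemma forall_of_fromRel_connected {X : Type*} {r : X → X → Prop}
    (hr : (SimpleGraph.fromRel r).Connected) {P : X → Prop} (h : ∀ x y, r x y → (P x ↔ P y))
    {x : X} (hx : P x) (y : X) : P y := by
  obtain ⟨p⟩ := hr.preconnected x y
  induction p with
  | nil => exact hx
  | cons hadj _ ih =>
    obtain ⟨_, hxy | hyx⟩ := hadj
    · exact ih ((h _ _ hxy).1 hx)
    · exact ih ((h _ _ hyx).2 hx)

lemma sumElim_neg_swap {E : Type*} (w : E → ℝ) (h : E ⊕ E) :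
    Sum.elim (-w) w h.swap = -Sum.elim (-w) w h := by
  cases h <;> simp

variable {V E : Type*} {src tgt : E → V}

lemma finrank_ker_coboundary_le_one (hconn : (multiGraph src tgt Set.univ).Connected) :
    Module.finrank ℝ (LinearMap.ker (coboundary src tgt)) ≤ 1 := by
  have hone : (1 : V → ℝ) ∈ LinearMap.ker (coboundary src tgt) := by
    ext e
    simp [coboundary_apply]
  obtain ⟨v⟩ := hconn.nonempty
  refine finrank_le_one ⟨1, hone⟩ fun ⟨φ, hφ⟩ => ⟨φ v, Subtype.ext (funext fun u => ?_)⟩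
  suffices φ u = φ v by simp [this]
  refine forall_of_fromRel_connected hconn (P := fun u => φ u = φ v) ?_ rfl u
  rintro _ _ ⟨e, -, rfl, rfl⟩
  have : φ (tgt e) = φ (src e) := sub_eq_zero.1 (congrFun hφ e)
  rw [this]

variable [Fintype E]

/-- The vector `w` spans the cycle space: exactly the potentials orthogonal to it are gauge
equivalent to zero. -/
def IsCycleGenerator (src tgt : E → V) (w : E → ℝ) : Prop :=
  ∀ α, α ⬝ᵥ w = 0 ↔ α ∈ LinearMap.range (coboundary src tgt)

lemma exists_isCycleGenerator [Fintype V] (hconn : (multiGraph src tgt Set.univ).Connected)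
    (hcard : Fintype.card E = Fintype.card V) {β : E → ℝ}
    (hβ : β ∉ LinearMap.range (coboundary src tgt)) :
    ∃ w, IsCycleGenerator src tgt w ∧ β ⬝ᵥ w = 1 := by
  classical
  obtain ⟨f, hfβ, hle⟩ := Submodule.exists_le_ker_of_notMem hβ
  have hrange := LinearMap.finrank_range_add_finrank_ker (coboundary src tgt)
  have hker := finrank_ker_coboundary_le_one hconn
  have hf := Module.Dual.finrank_ker_add_one_of_ne_zero (f := f) (by rintro rfl; exact hfβ rfl)
  rw [Module.finrank_fintype_fun_eq_card] at hrange hf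
  have heq : LinearMap.range (coboundary src tgt) = LinearMap.ker f :=
    Submodule.eq_of_le_of_finrank_le hle (by omega)
  have hdot (α : E → ℝ) : α ⬝ᵥ (dotProductEquiv ℝ E).symm f = f α := by
    rw [dotProduct_comm]
    exact LinearMap.congr_fun ((dotProductEquiv ℝ E).apply_symm_apply f) α
  refine ⟨(f β)⁻¹ • (dotProductEquiv ℝ E).symm f, fun α => ?_, ?_⟩
  · rw [dotProduct_smul, hdot, smul_eq_mul, heq, LinearMap.mem_ker, mul_eq_zero, inv_eq_zero,
      or_iff_right hfβ]
  · rw [dotProduct_smul, hdot, smul_eq_mul, inv_mul_cancel₀ hfβ]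

lemma IsCycleGenerator.exists_eq_smul_add_coboundary {w : E → ℝ} (hw : IsCycleGenerator src tgt w)
    {β : E → ℝ} (hβ : β ⬝ᵥ w ≠ 0) (α : E → ℝ) :
    ∃ s : ℝ, ∃ φ, α = s • β + coboundary src tgt φ := by
  obtain ⟨φ, hφ⟩ := (hw (α - (α ⬝ᵥ w / β ⬝ᵥ w) • β)).1 (by
    rw [sub_dotProduct, smul_dotProduct, smul_eq_mul, div_mul_cancel₀ _ hβ, sub_self])
  exact ⟨_, φ, by rw [hφ, add_sub_cancel]⟩

variable [DecidableEq V]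

/-- The half-edges issuing from `v`: `Sum.inl e` is the half of `e` at its source, `Sum.inr e` the
half at its target, so that a loop contributes two half-edges. -/
def halfEdgesAt (src tgt : E → V) (v : V) : Finset (E ⊕ E) :=
  {h | Sum.elim src tgt h = v}

@[simp]
lemma mem_halfEdgesAt {v : V} {h : E ⊕ E} : h ∈ halfEdgesAt src tgt v ↔ Sum.elim src tgt h = v := by
  simp [halfEdgesAt]

lemma sum_halfEdgesAt {M : Type*} [AddCommMonoid M] (v : V) (f : E ⊕ E → M) :
    ∑ h ∈ halfEdgesAt src tgt v, f h = ∑ e, ((if src e = v then f (Sum.inl e) else 0) +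
      if tgt e = v then f (Sum.inr e) else 0) := by
  simp only [halfEdgesAt, Finset.sum_filter, Fintype.sum_sum_type, Sum.elim_inl, Sum.elim_inr,
    Finset.sum_add_distrib]
  rfl

lemma mdeg_eq_card_halfEdgesAt (v : V) : mdeg src tgt v = (halfEdgesAt src tgt v).card := by
  rw [Finset.card_eq_sum_ones, sum_halfEdgesAt, mdeg]

lemma sum_mdeg [Fintype V] : ∑ v, mdeg src tgt v = 2 * Fintype.card E := by
  simp only [mdeg_eq_card_halfEdgesAt, halfEdgesAt]
  rw [← Finset.card_eq_sum_card_fiberwise fun _ _ => Finset.mem_coe.2 (Finset.mem_univ _),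
    Finset.card_univ, Fintype.card_sum, two_mul]

lemma mdeg_pos [Nonempty E] (hconn : (multiGraph src tgt Set.univ).Connected) (v : V) :
    0 < mdeg src tgt v := by
  obtain ⟨e⟩ := ‹Nonempty E›
  obtain ⟨h, hv⟩ : ∃ h, Sum.elim src tgt h = v := by
    refine forall_of_fromRel_connected hconn (P := fun v => ∃ h, Sum.elim src tgt h = v) ?_
      (x := src e) ⟨Sum.inl e, rfl⟩ v
    rintro _ _ ⟨e, -, rfl, rfl⟩
    exact iff_of_true ⟨Sum.inl e, rfl⟩ ⟨Sum.inr e, rfl⟩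
  rw [mdeg_eq_card_halfEdgesAt]
  exact Finset.card_pos.2 ⟨h, mem_halfEdgesAt.2 hv⟩

lemma mdeg_eq_two_of_forall_ne_one [Fintype V] [Nonempty V]
    (hconn : (multiGraph src tgt Set.univ).Connected)
    (hcard : Fintype.card E = Fintype.card V) (hleaf : ∀ v, mdeg src tgt v ≠ 1) (v : V) :
    mdeg src tgt v = 2 := by
  have : Nonempty E := Fintype.card_pos_iff.1 (hcard ▸ Fintype.card_pos)
  have hge (v : V) : 2 ≤ mdeg src tgt v := by
    have := mdeg_pos hconn v
    have := hleaf v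
    omega
  have hsum : ∑ _v : V, 2 = ∑ v, mdeg src tgt v := by
    rw [sum_mdeg, hcard, Finset.sum_const, Finset.card_univ, smul_eq_mul, mul_comm]
  exact ((Finset.sum_eq_sum_iff_of_le fun v _ => hge v).1 hsum v (Finset.mem_univ v)).symm

/-- Kirchhoff's law: at every vertex the net flow of `w`, read along the edge directions, is
zero. -/
def IsCirculation (src tgt : E → V) (w : E → ℝ) : Prop :=
  ∀ v, ∑ h ∈ halfEdgesAt src tgt v, Sum.elim (-w) w h = 0

lemma IsCycleGenerator.isCirculation {w : E → ℝ} (hw : IsCycleGenerator src tgt w) :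
    IsCirculation src tgt w := by
  intro v
  rw [sum_halfEdgesAt]
  refine Eq.trans ?_ ((hw _).2 ⟨Pi.single v 1, rfl⟩)
  refine Finset.sum_congr rfl fun e _ => ?_
  simp only [coboundary_apply, Pi.single_apply, Sum.elim_inl, Sum.elim_inr, Pi.neg_apply]
  split_ifs <;> ring

namespace IsCirculation

variable {w : E → ℝ} (hw : IsCirculation src tgt w)

include hw

lemma two_le_mdeg {h : E ⊕ E} (hh : Sum.elim (-w) w h ≠ 0) :
    2 ≤ mdeg src tgt (Sum.elim src tgt h) := by
  rw [mdeg_eq_card_halfEdgesAt]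
  by_contra! hlt
  have hsingle : halfEdgesAt src tgt (Sum.elim src tgt h) = {h} :=
    Finset.eq_singleton_iff_unique_mem.2 ⟨mem_halfEdgesAt.2 rfl, fun k hk =>
      Finset.card_le_one.1 (Nat.le_of_lt_succ hlt) k hk h (mem_halfEdgesAt.2 rfl)⟩
  exact hh (by simpa only [hsingle, Finset.sum_singleton] using hw (Sum.elim src tgt h))

lemma ne_zero_of_mdeg_eq_two (hconn : (multiGraph src tgt Set.univ).Connected) (hw0 : w ≠ 0)
    (hdeg : ∀ h, Sum.elim (-w) w h ≠ 0 → mdeg src tgt (Sum.elim src tgt h) = 2) (h : E ⊕ E) :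
    Sum.elim (-w) w h ≠ 0 := by
  classical
  let P (v : V) : Prop := ∀ k ∈ halfEdgesAt src tgt v, Sum.elim (-w) w k ≠ 0
  have hP {h} (hh : Sum.elim (-w) w h ≠ 0) : P (Sum.elim src tgt h) := by
    intro k hk hk0
    have hcard := (mdeg_eq_card_halfEdgesAt _).symm.trans (hdeg h hh)
    obtain ⟨a, b, hab, hs⟩ := Finset.card_eq_two.1 hcard
    have hflow := hw (Sum.elim src tgt h)
    have hmem := mem_halfEdgesAt.2 (Eq.refl (Sum.elim src tgt h))
    rw [hs] at hmem hk hflow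
    rw [Finset.sum_pair hab] at hflow
    grind
  have hswap {h} (hPh : P (Sum.elim src tgt h)) : P (Sum.elim src tgt h.swap) :=
    hP (sumElim_neg_swap w h ▸ neg_ne_zero.2 (hPh h (mem_halfEdgesAt.2 rfl)))
  obtain ⟨e, he⟩ := Function.ne_iff.1 hw0
  refine forall_of_fromRel_connected hconn ?_ (hP (h := Sum.inr e) he) (Sum.elim src tgt h) h
    (mem_halfEdgesAt.2 rfl)
  rintro _ _ ⟨e, -, rfl, rfl⟩
  exact ⟨hswap (h := Sum.inl e), hswap (h := Sum.inr e)⟩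

lemma exists_three_le_mdeg (hconn : (multiGraph src tgt Set.univ).Connected)
    (hw0 : w ≠ 0) {v : V} (hv : mdeg src tgt v = 1) :
    ∃ h, Sum.elim (-w) w h ≠ 0 ∧ 3 ≤ mdeg src tgt (Sum.elim src tgt h) := by
  by_contra! hlt
  have hdeg (h) (hh : Sum.elim (-w) w h ≠ 0) : mdeg src tgt (Sum.elim src tgt h) = 2 :=
    (Nat.le_of_lt_succ (hlt h hh)).antisymm (hw.two_le_mdeg hh)
  have hcard : 0 < (halfEdgesAt src tgt v).card := by
    rw [← mdeg_eq_card_halfEdgesAt, hv]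
    exact one_pos
  obtain ⟨h, hh⟩ := Finset.card_pos.1 hcard
  have := hdeg h (hw.ne_zero_of_mdeg_eq_two hconn hw0 hdeg h)
  rw [mem_halfEdgesAt.1 hh] at this
  omega

lemma exists_halfEdgesAt_eq_pair [DecidableEq E]
    (hconn : (multiGraph src tgt Set.univ).Connected) (hw0 : w ≠ 0)
    (hdeg : ∀ v, mdeg src tgt v = 2) (v : V) :
    ∃ a b, halfEdgesAt src tgt v = {a, b} ∧ 0 < Sum.elim (-w) w a ∧ Sum.elim (-w) w b < 0 := by
  obtain ⟨a, b, hab, hs⟩ := Finset.card_eq_two.1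
    ((mdeg_eq_card_halfEdgesAt _).symm.trans (hdeg v))
  have hflow := hw v
  rw [hs, Finset.sum_pair hab] at hflow
  obtain ha | ha := (hw.ne_zero_of_mdeg_eq_two hconn hw0 (fun _ _ => hdeg _) a).lt_or_gt
  · exact ⟨b, a, hs.trans (Finset.pair_comm a b), by linarith, ha⟩
  · exact ⟨a, b, hs, ha, by linarith⟩

end IsCirculation

end Circulation

section BettiNumberOne

variable {V E : Type*} [Fintype E] [DecidableEq V] {src tgt : E → V} {m : V → ℝ} {mE : E → ℝ}

lemma rho_eq_mdeg_div (hmE : ∀ e, mE e = 1) (v : V) :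
    rho src tgt m mE v = mdeg src tgt v / m v := by
  simp [rho, edgeSumAt, mdeg, hmE]

lemma one_div_add_one_div_lt_mdeg_div {s t u : V} (hu : s = u ∨ t = u)
    (hm : (∀ v, m v = mdeg src tgt v) ∨ ∀ v, m v = 1) (hs : 2 ≤ mdeg src tgt s)
    (ht : 2 ≤ mdeg src tgt t) (hdeg : 3 ≤ mdeg src tgt u) :
    1 / m s + 1 / m t < mdeg src tgt u / m u := by
  have hinv {n k : ℕ} (hk : 0 < k) (h : k ≤ n) : (1 / n : ℝ) ≤ 1 / k :=
    one_div_le_one_div_of_le (by exact_mod_cast hk) (by exact_mod_cast h)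
  obtain hm | hm := hm
  · have hu0 : (mdeg src tgt u : ℝ) ≠ 0 := by positivity
    have h2s := hinv two_pos hs
    have h2t := hinv two_pos ht
    have h3u := hinv three_pos hdeg
    simp only [hm, div_self hu0]
    obtain rfl | rfl := hu <;> push_cast at * <;> linarith
  · have : (3 : ℝ) ≤ mdeg src tgt u := by exact_mod_cast hdeg
    simp only [hm, div_one]
    linarith

lemma IsCycleGenerator.msSet_nonempty_of_mdeg_eq_one [Fintype V] [Nonempty V]
    {w : E → ℝ} (hw : IsCycleGenerator src tgt w) (hw0 : w ≠ 0)
    (hconn : (multiGraph src tgt Set.univ).Connected)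
    (hm : (∀ v, m v = mdeg src tgt v) ∨ ∀ v, m v = 1) (hmE : ∀ e, mE e = 1) {v : V}
    (hv : mdeg src tgt v = 1) : (msSet src tgt m mE).Nonempty := by
  classical
  have hcirc := hw.isCirculation
  obtain ⟨h, hh, hdeg⟩ := hcirc.exists_three_le_mdeg hconn hw0 hv
  obtain ⟨e, he, hu⟩ :
      ∃ e, w e ≠ 0 ∧ (src e = Sum.elim src tgt h ∨ tgt e = Sum.elim src tgt h) := by
    cases h with
    | inl e => exact ⟨e, by simpa using hh, .inl rfl⟩
    | inr e => exact ⟨e, hh, .inr rfl⟩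
  refine msSet_nonempty_of_lt_rho (fun v => ?_) (by simp [hmE]) hu (fun α => ?_) ?_
  · obtain hm | hm := hm <;> simp [hm]
  · obtain ⟨s, φ, hα⟩ := hw.exists_eq_smul_add_coboundary (β := Pi.single e 1) (by simpa) α
    exact ⟨s, φ, by rw [hα, ← Pi.single_smul, smul_eq_mul, mul_one]⟩
  · rw [rho_eq_mdeg_div hmE, hmE]
    exact one_div_add_one_div_lt_mdeg_div hu hm
      (hcirc.two_le_mdeg (h := Sum.inl e) (by simpa using he))
      (hcirc.two_le_mdeg (h := Sum.inr e) he) hdeg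

lemma IsCycleGenerator.realSpec_dml_subset_iUnion [Fintype V] {w : E → ℝ}
    (hw : IsCycleGenerator src tgt w) {β : E → ℝ} (hβ : β ⬝ᵥ w ≠ 0) (α : E → ℝ) :
    realSpec (dml src tgt m mE α) ⊆ ⋃ t : ℝ, realSpec (dml src tgt m mE (t • β)) := by
  obtain ⟨t, φ, rfl⟩ := hw.exists_eq_smul_add_coboundary hβ α
  rw [realSpec_dml_add_coboundary]
  exact Set.subset_iUnion (fun t : ℝ => realSpec (dml src tgt m mE (t • β))) t

lemma dml_mulVec_sqrt [Fintype V] (hm : ∀ v, 0 < m v) (α : E → ℝ) (u : V) :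
    (dml src tgt m mE α *ᵥ fun v => (√(m v) : ℂ)) u = (√(m u) : ℂ)⁻¹ *
      ∑ h ∈ halfEdgesAt src tgt u, (mE (Sum.elim id id h) : ℂ) *
        (1 - Complex.exp (Sum.elim (-α) α h * Complex.I)) := by
  have hrow (v : V) : dml src tgt m mE α u v * √(m v) = (√(m u) : ℂ)⁻¹ *
      ∑ e, mE e * (star (magneticCoboundary src tgt α e u) * magneticCoboundary src tgt α e v) := by
    have : (√(m v) : ℂ) ≠ 0 := Complex.ofReal_ne_zero.2 (Real.sqrt_pos.2 (hm v)).ne'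
    rw [dml_apply src tgt fun v => (hm v).le, mul_right_comm, inv_mul_cancel_right₀ this]
  have hsum (e : E) :
      ∑ v, magneticCoboundary src tgt α e v = 1 - Complex.exp (α e * Complex.I) := by
    simp [magneticCoboundary, Finset.sum_sub_distrib]
  have hunit (e : E) : Complex.exp (-(α e * Complex.I)) * Complex.exp (α e * Complex.I) = 1 := by
    rw [← Complex.exp_add, neg_add_cancel, Complex.exp_zero]
  rw [mulVec, dotProduct, Finset.sum_congr rfl fun v _ => hrow v, ← Finset.mul_sum,
    Finset.sum_comm, sum_halfEdgesAt]
  congr 1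
  refine Finset.sum_congr rfl fun e _ => ?_
  rw [← Finset.mul_sum, ← Finset.mul_sum, hsum]
  simp only [magneticCoboundary, star_sub, apply_ite star, star_one, star_zero,
    star_exp_ofReal_mul_I, Sum.elim_inl, Sum.elim_inr, id, Pi.neg_apply, Complex.ofReal_neg,
    neg_mul]
  by_cases hs : src e = u
  · simp only [hs, if_true]
    split_ifs <;> linear_combination mE e * hunit e
  · simp only [hs, if_false]
    split_ifs <;> ring

lemma mem_realSpec_of_mulVec_eq_smul [Fintype V] {M : Matrix V V ℂ} {x : ℝ} {f : V → ℂ}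
    (hf : f ≠ 0) (h : M *ᵥ f = (x : ℂ) • f) : x ∈ realSpec M := by
  rw [realSpec, Set.mem_ofPred_eq, ← Matrix.spectrum_toLin']
  refine (Module.End.hasEigenvalue_of_hasEigenvector (x := f) ⟨?_, hf⟩).mem_spectrum
  rwa [Module.End.mem_eigenspace_iff, Matrix.toLin'_apply]

lemma IsCirculation.mem_realSpec_dml_mul_sign [Fintype V] [Nonempty V] {w : E → ℝ}
    (hw : IsCirculation src tgt w) (hw0 : w ≠ 0)
    (hconn : (multiGraph src tgt Set.univ).Connected) (hdeg : ∀ v, mdeg src tgt v = 2)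
    {μ : ℝ} (hμ : 0 < μ) (hm : ∀ v, m v = μ) (hmE : ∀ e, mE e = 1) (κ : ℝ) :
    (2 - 2 * Real.cos κ) / μ ∈ realSpec (dml src tgt m mE (fun e => κ * (w e).sign)) := by
  classical
  have hsign (h : E ⊕ E) : Sum.elim (-fun e => κ * (w e).sign) (fun e => κ * (w e).sign) h =
      κ * (Sum.elim (-w) w h).sign := by
    cases h <;> simp [Real.sign_neg]
  have hsqrt : (√μ : ℂ) ≠ 0 := Complex.ofReal_ne_zero.2 (Real.sqrt_pos.2 hμ).ne'
  refine mem_realSpec_of_mulVec_eq_smul (f := fun v => √(m v)) ?_ (funext fun u => ?_)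
  · refine Function.ne_iff.2 ⟨Classical.arbitrary V, ?_⟩
    simpa only [hm, Pi.zero_apply] using hsqrt
  · obtain ⟨a, b, hab, ha, hb⟩ := hw.exists_halfEdgesAt_eq_pair hconn hw0 hdeg u
    have hne : a ≠ b := by
      rintro rfl
      exact ha.not_gt hb
    rw [dml_mulVec_sqrt (by simpa [hm] using hμ), hab, Finset.sum_pair hne]
    simp only [hsign, Real.sign_of_pos ha, Real.sign_of_neg hb, hmE, hm, Pi.smul_apply, smul_eq_mul]
    have hcos := Complex.two_cos (κ : ℂ)
    have hμμ : (√μ : ℂ) * √μ = μ := by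
      rw [← Complex.ofReal_mul, Real.mul_self_sqrt hμ.le]
    push_cast
    rw [← hμμ]
    field_simp
    ring_nf at hcos ⊢
    linear_combination hcos

lemma IsCirculation.Icc_subset_iUnion_realSpec_dml [Fintype V] [Nonempty V] {w : E → ℝ}
    (hw : IsCirculation src tgt w) (hw0 : w ≠ 0)
    (hconn : (multiGraph src tgt Set.univ).Connected) (hdeg : ∀ v, mdeg src tgt v = 2)
    {μ : ℝ} (hμ : 0 < μ) (hm : ∀ v, m v = μ) (hmE : ∀ e, mE e = 1) :
    Set.Icc 0 (2 * Finset.univ.sup' Finset.univ_nonempty (rho src tgt m mE)) ⊆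
      ⋃ α, realSpec (dml src tgt m mE α) := by
  have hrho : rho src tgt m mE = fun _ => 2 / μ := by
    ext v
    rw [rho_eq_mdeg_div hmE, hdeg, hm, Nat.cast_ofNat]
  rintro x ⟨hx0, hx⟩
  rw [hrho, Finset.sup'_const, ← mul_div_assoc, le_div_iff₀ hμ] at hx
  have hxμ := mul_nonneg hx0 hμ.le
  have hmem := hw.mem_realSpec_dml_mul_sign hw0 hconn hdeg hμ hm hmE
    (Real.arccos (1 - x * μ / 2))
  rw [Real.cos_arccos (by linarith) (by linarith)] at hmem
  have hx' : (2 - 2 * (1 - x * μ / 2)) / μ = x := by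
    field_simp
    ring
  exact Set.mem_iUnion.2 ⟨_, hx' ▸ hmem⟩

lemma IsCycleGenerator.iUnion_realSpec_dml_smul_eq_Icc [Fintype V] [Nonempty V] {w : E → ℝ}
    (hw : IsCycleGenerator src tgt w) {β : E → ℝ} (hβ : β ⬝ᵥ w ≠ 0)
    (hconn : (multiGraph src tgt Set.univ).Connected) (hdeg : ∀ v, mdeg src tgt v = 2)
    {μ : ℝ} (hμ : 0 < μ) (hm : ∀ v, m v = μ) (hmE : ∀ e, mE e = 1) :
    ⋃ t : ℝ, realSpec (dml src tgt m mE (t • β)) =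
      Set.Icc 0 (2 * Finset.univ.sup' Finset.univ_nonempty (rho src tgt m mE)) := by
  have hw0 : w ≠ 0 := by
    rintro rfl
    exact hβ (dotProduct_zero β)
  refine (Set.iUnion_subset fun t => ?_).antisymm
    ((hw.isCirculation.Icc_subset_iUnion_realSpec_dml hw0 hconn hdeg hμ hm hmE).trans
      (Set.iUnion_subset (hw.realSpec_dml_subset_iUnion hβ)))
  exact realSpec_dml_subset_Icc (fun v => by simp [hm, hμ.le]) (by simp [hmE]) _

end BettiNumberOne

section Cover

lemma nonempty_fromRel_perm_iso_int {X : Type*} [Infinite X] (T : Equiv.Perm X)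
    (hT : (SimpleGraph.fromRel fun x y => y = T x).Connected) :
    Nonempty ((SimpleGraph.fromRel fun x y => y = T x) ≃g
      SimpleGraph.fromRel fun a b : ℤ => b = a + 1) := by
  obtain ⟨x₀⟩ := hT.nonempty
  have hsucc (j : ℤ) : (T ^ (j + 1)) x₀ = T ((T ^ j) x₀) := by
    rw [_root_.zpow_add_one, (Commute.zpow_self T j).eq, Equiv.Perm.mul_apply]
  have hsurj (y : X) : ∃ j : ℤ, (T ^ j) x₀ = y := by
    refine forall_of_fromRel_connected hT (P := fun y => ∃ j : ℤ, (T ^ j) x₀ = y) ?_ ⟨0, rfl⟩ y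
    rintro x _ rfl
    exact ⟨fun ⟨j, hj⟩ => ⟨j + 1, by rw [hsucc, hj]⟩,
      fun ⟨j, hj⟩ => ⟨j - 1, T.injective (by rw [← hsucc, sub_add_cancel, hj])⟩⟩
  have hperiod : Function.minimalPeriod (T • ·) x₀ = 0 := by
    by_contra hne
    have : NeZero (Function.minimalPeriod (T • ·) x₀) := ⟨hne⟩
    have hfin : (MulAction.orbit (Subgroup.zpowers T) x₀).Finite :=
      Finite.of_equiv _ (MulAction.orbitZPowersEquiv T x₀).symm
    refine Set.infinite_univ (hfin.subset fun y _ => ?_)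
    obtain ⟨j, rfl⟩ := hsurj y
    exact ⟨⟨T ^ j, j, rfl⟩, rfl⟩
  have hinj : Function.Injective fun j : ℤ => (T ^ j) x₀ := by
    intro j k hjk
    have h := (MulAction.zpow_smul_eq_iff_minimalPeriod_dvd (a := T) (b := x₀) (n := k - j)).1 (by
      rw [sub_eq_neg_add, _root_.zpow_add, _root_.zpow_neg, mul_smul, inv_smul_eq_iff]
      exact hjk.symm)
    rw [hperiod, Int.natCast_zero, zero_dvd_iff, sub_eq_zero] at h
    exact h.symm
  let f : ℤ ≃ X := Equiv.ofBijective _ ⟨hinj, hsurj⟩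
  refine ⟨RelIso.symm ⟨f, fun {j k} => ?_⟩⟩
  have hf (j : ℤ) : T (f j) = f (j + 1) := (hsucc j).symm
  simp only [SimpleGraph.fromRel_adj, hf, f.injective.eq_iff, ne_eq]

variable {V E : Type*}

/-- The `ℤ`-cover of the multigraph whose edge `e` raises the level by `ind e`. -/
def coverGraph (src tgt : E → V) (ind : E → ℤ) : SimpleGraph (ℤ × V) :=
  SimpleGraph.fromRel fun x y =>
    ∃ p : ℤ × E, x = (p.1, src p.2) ∧ y = (p.1 + ind p.2, tgt p.2)

/-- The vertex of the cover reached from level `n` along the half-edge `h`. -/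
def coverStep (src tgt : E → V) (ind : E → ℤ) (n : ℤ) (h : E ⊕ E) : ℤ × V :=
  (n + Sum.elim ind (-ind) h, Sum.elim tgt src h)

variable {src tgt : E → V} {ind : E → ℤ}

lemma coverStep_swap (n : ℤ) (h : E ⊕ E) :
    coverStep src tgt ind (coverStep src tgt ind n h).1 h.swap = (n, Sum.elim src tgt h) := by
  cases h <;> simp [coverStep]

lemma coverStep_snd (n : ℤ) (h : E ⊕ E) :
    (coverStep src tgt ind n h).2 = Sum.elim src tgt h.swap := by
  cases h <;> rfl

lemma cast_notMem_range_coboundary (hcov : (coverGraph src tgt ind).Connected) :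
    (fun e => (ind e : ℝ)) ∉ LinearMap.range (coboundary src tgt) := by
  rintro ⟨φ, hφ⟩
  obtain ⟨-, v⟩ := hcov.nonempty
  have hlevel : ((1 : ℤ) : ℝ) - φ v = -φ v := by
    refine forall_of_fromRel_connected hcov (P := fun x => (x.1 : ℝ) - φ x.2 = -φ v) ?_
      (x := (0, v)) (by simp) (1, v)
    rintro _ _ ⟨⟨n, e⟩, rfl, rfl⟩
    have := congrFun hφ e
    rw [coboundary_apply] at this
    push_cast [← this]
    ring_nf
  simp at hlevel

variable [Fintype E] [DecidableEq V]

lemma coverGraph_adj {x y : ℤ × V} : (coverGraph src tgt ind).Adj x y ↔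
    x ≠ y ∧ ∃ h ∈ halfEdgesAt src tgt x.2, y = coverStep src tgt ind x.1 h := by
  refine and_congr_right fun _ => ⟨?_, ?_⟩
  · rintro (⟨⟨n, e⟩, rfl, rfl⟩ | ⟨⟨n, e⟩, rfl, rfl⟩)
    · exact ⟨Sum.inl e, by simp, rfl⟩
    · exact ⟨Sum.inr e, by simp, by simp [coverStep]⟩
  · obtain ⟨n, v⟩ := x
    rintro ⟨h, hh, rfl⟩
    obtain rfl := mem_halfEdgesAt.1 hh
    cases h with
    | inl e => exact .inl ⟨(n, e), rfl, rfl⟩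
    | inr e => exact .inr ⟨(n - ind e, e), by simp [coverStep, sub_eq_add_neg], by simp⟩

lemma mdeg_ne_one_of_coverGraph_iso
    (F : coverGraph src tgt ind ≃g SimpleGraph.fromRel fun a b : ℤ => b = a + 1) (v : V) :
    mdeg src tgt v ≠ 1 := by
  rw [mdeg_eq_card_halfEdgesAt]
  intro hcard
  obtain ⟨h, hh⟩ := Finset.card_eq_one.1 hcard
  have hunique {k : ℤ} (hk : (SimpleGraph.fromRel fun a b : ℤ => b = a + 1).Adj (F (0, v)) k) :
      F.symm k = coverStep src tgt ind 0 h := by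
    rw [← F.apply_symm_apply k, F.map_adj_iff, coverGraph_adj, hh] at hk
    simpa using hk.2
  have hpred := hunique (k := F (0, v) - 1) ⟨by omega, .inr (by omega)⟩
  have hsucc := hunique (k := F (0, v) + 1) ⟨by omega, .inl rfl⟩
  have := F.symm.injective (hpred.trans hsucc.symm)
  omega

lemma IsCirculation.exists_perm_coverGraph_eq {w : E → ℝ} (hw : IsCirculation src tgt w)
    (hw0 : w ≠ 0) (hconn : (multiGraph src tgt Set.univ).Connected)
    (hdeg : ∀ v, mdeg src tgt v = 2) :
    ∃ T : Equiv.Perm (ℤ × V), coverGraph src tgt ind = SimpleGraph.fromRel fun x y => y = T x := by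
  classical
  choose a b hab ha hb using hw.exists_halfEdgesAt_eq_pair hconn hw0 hdeg
  have hmem (h : E ⊕ E) : h = a (Sum.elim src tgt h) ∨ h = b (Sum.elim src tgt h) := by
    simpa [hab] using mem_halfEdgesAt.2 (Eq.refl (Sum.elim src tgt h))
  have hva (v : V) : Sum.elim src tgt (a v) = v := mem_halfEdgesAt.1 (by simp [hab])
  have hvb (v : V) : Sum.elim src tgt (b v) = v := mem_halfEdgesAt.1 (by simp [hab])
  have hswap_a (v : V) : (a v).swap = b (Sum.elim src tgt (a v).swap) :=
    (hmem (a v).swap).resolve_left fun h => by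
      have := ha (Sum.elim src tgt (a v).swap)
      rw [← h, sumElim_neg_swap] at this
      linarith [ha v]
  have hswap_b (v : V) : (b v).swap = a (Sum.elim src tgt (b v).swap) :=
    (hmem (b v).swap).resolve_right fun h => by
      have := hb (Sum.elim src tgt (b v).swap)
      rw [← h, sumElim_neg_swap] at this
      linarith [hb v]
  let T : Equiv.Perm (ℤ × V) :=
    { toFun x := coverStep src tgt ind x.1 (a x.2)
      invFun x := coverStep src tgt ind x.1 (b x.2)
      left_inv x := by dsimp only; rw [coverStep_snd, ← hswap_a, coverStep_swap, hva]
      right_inv x := by dsimp only; rw [coverStep_snd, ← hswap_b, coverStep_swap, hvb] }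
  refine ⟨T, ?_⟩
  ext x y
  rw [coverGraph_adj, hab, SimpleGraph.fromRel_adj, eq_comm (a := x) (b := T y),
    ← Equiv.eq_symm_apply]
  simp [T]

lemma IsCirculation.nonempty_coverGraph_iso [Nonempty V] {w : E → ℝ}
    (hw : IsCirculation src tgt w) (hw0 : w ≠ 0)
    (hconn : (multiGraph src tgt Set.univ).Connected) (hdeg : ∀ v, mdeg src tgt v = 2)
    (hcov : (coverGraph src tgt ind).Connected) :
    Nonempty (coverGraph src tgt ind ≃g SimpleGraph.fromRel fun a b : ℤ => b = a + 1) := by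
  obtain ⟨T, hT⟩ := hw.exists_perm_coverGraph_eq (ind := ind) hw0 hconn hdeg
  rw [hT] at hcov ⊢
  exact nonempty_fromRel_perm_iso_int T hcov

end Cover

/-- Higuchi–Shirai's conjecture for `ℤ`-periodic trees. Model the
`ℤ`-periodic graph over the finite connected quotient `(V, E, src, tgt)` (Betti
number 1, i.e. `|E| = |V|`) via the index `ind : E → ℤ`, and assume the covering
graph is a tree (connected, acyclic, no loops). With standard or combinatorial
weights, TFAE: (1) the periodic Laplacian has full spectrum `[0, 2ρ_∞]` (its
spectrum being `⋃_t σ(Δ_{t·ind})` by Floquet theory); (2) its spectral gaps set is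
empty; (3) the covering graph is the lattice `ℤ`; (4) the magnetic spectral gaps set
of the quotient is empty; (5) the quotient is a cycle graph (2-regular); (6) the
quotient has no vertex of degree 1. -/
theorem stmt18 {V E : Type*} [Fintype V] [Fintype E] [DecidableEq V] [DecidableEq E]
    [Nonempty V] (src tgt : E → V) (ind : E → ℤ) (m : V → ℝ) (mE : E → ℝ)
    (hweights : ((∀ v, m v = (mdeg src tgt v : ℝ)) ∧ ∀ e, mE e = 1) ∨
                ((∀ v, m v = 1) ∧ ∀ e, mE e = 1))
    (hconn : (multiGraph src tgt Set.univ).Connected)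
    (hbetti : Fintype.card E = Fintype.card V)
    (hcovconn : (SimpleGraph.fromRel (fun x y : ℤ × V =>
        ∃ p : ℤ × E, x = (p.1, src p.2) ∧ y = (p.1 + ind p.2, tgt p.2))).Connected)
    (hcovacyc : (SimpleGraph.fromRel (fun x y : ℤ × V =>
        ∃ p : ℤ × E, x = (p.1, src p.2) ∧ y = (p.1 + ind p.2, tgt p.2))).IsAcyclic)
    (hnoloop : ∀ p : ℤ × E, (p.1, src p.2) ≠ (p.1 + ind p.2, tgt p.2)) :
    List.TFAE
      [ -- (1) full spectrum property for the periodic Laplacian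
        (⋃ t : ℝ, realSpec (dml src tgt m mE (fun e => t * (ind e : ℝ)))) =
          Set.Icc 0 (2 * Finset.univ.sup' Finset.univ_nonempty (rho src tgt m mE)),
        -- (2) the spectral gaps set of the periodic Laplacian is empty
        Set.Icc 0 (2 * Finset.univ.sup' Finset.univ_nonempty (rho src tgt m mE)) \
          (⋃ t : ℝ, realSpec (dml src tgt m mE (fun e => t * (ind e : ℝ)))) = ∅,
        -- (3) the covering graph is the lattice ℤ
        Nonempty ((SimpleGraph.fromRel (fun x y : ℤ × V =>
            ∃ p : ℤ × E, x = (p.1, src p.2) ∧ y = (p.1 + ind p.2, tgt p.2))) ≃g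
          SimpleGraph.fromRel (fun a b : ℤ => b = a + 1)),
        -- (4) the magnetic spectral gaps set of the quotient is empty
        msSet src tgt m mE = ∅,
        -- (5) the quotient is a cycle graph
        ∀ v : V, mdeg src tgt v = 2,
        -- (6) the quotient has no vertex of degree 1
        ¬ ∃ v : V, mdeg src tgt v = 1 ] := by
  have hmE : ∀ e, mE e = 1 := by tauto
  have hm : (∀ v, m v = mdeg src tgt v) ∨ ∀ v, m v = 1 := by tauto
  obtain ⟨w, hw, hind⟩ :=
    exists_isCycleGenerator hconn hbetti (cast_notMem_range_coboundary hcovconn)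
  have hw0 : w ≠ 0 := by rintro rfl; simp at hind
  tfae_have 1 → 2 := fun h => by rw [h, Set.sdiff_self]
  tfae_have 2 → 4 := fun h => Set.sdiff_eq_empty.2 <|
    (Set.sdiff_eq_empty.1 h).trans (Set.iUnion_subset fun t =>
      Set.subset_iUnion (fun α => realSpec (dml src tgt m mE α)) (fun e => t * (ind e : ℝ)))
  tfae_have 4 → 6 := fun h ⟨v, hv⟩ =>
    (hw.msSet_nonempty_of_mdeg_eq_one hw0 hconn hm hmE hv).ne_empty h
  tfae_have 6 → 5 := fun h => mdeg_eq_two_of_forall_ne_one hconn hbetti (not_exists.1 h)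
  tfae_have 5 → 1 := fun hdeg => by
    obtain ⟨μ, hμ, hmμ⟩ : ∃ μ, 0 < μ ∧ ∀ v, m v = μ := by
      obtain hm | hm := hm
      · exact ⟨2, two_pos, fun v => by rw [hm, hdeg, Nat.cast_ofNat]⟩
      · exact ⟨1, one_pos, hm⟩
    exact hw.iUnion_realSpec_dml_smul_eq_Icc (by simp [hind]) hconn hdeg hμ hmμ hmE
  tfae_have 5 → 3 := fun hdeg =>
    hw.isCirculation.nonempty_coverGraph_iso hw0 hconn hdeg hcovconn
  tfae_have 3 → 6 := fun ⟨F⟩ ⟨v, hv⟩ => mdeg_ne_one_of_coverGraph_iso F v hv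
  tfae_finish
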